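/- For every natural number n ≥ 39, every admissible multiplicity function m, every sum labeling ℓ of G(n,m), and every vertex v = (i,j) of G(n,m): if ℓ(v) = 1, then i ≤ 3. -/

import Mathlib

/-- `Sn n = {2,3,…,n} ∪ {n+2}`. -/
def Sn (n : ℕ) : Set ℕ := {k | (2 ≤ k ∧ k ≤ n) ∨ k = n + 2}

/-- `m` is an admissible multiplicity function for `Sn n`. -/
def Admissible (n : ℕ) (m : ℕ → ℕ) : Prop :=
  (∀ i ∈ Sn n, 2 * i ∈ Sn n → 2 ≤ m i) ∧
  (∀ i ∈ Sn n, 2 * i ∉ Sn n → m i = 1) ∧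
  (∀ i, i ∉ Sn n → m i = 0)

/-- The vertex set of `G(n,m)`: pairs `(i,j)` with `i ∈ Sn n` and `j < m i`. -/
def Vnm (n : ℕ) (m : ℕ → ℕ) : Set (ℕ × ℕ) := {p | p.1 ∈ Sn n ∧ p.2 < m p.1}

/-- Distinct vertices `u`, `v` of `G(n,m)` are adjacent iff `u.1 + v.1 ∈ Sn n`. -/
def AdjG (n : ℕ) (u v : ℕ × ℕ) : Prop := u ≠ v ∧ u.1 + v.1 ∈ Sn n

/-- `psi m i` is the set of vertices induced by the integer `i`. -/
def psi (m : ℕ → ℕ) (i : ℕ) : Set (ℕ × ℕ) := {p | p.1 = i ∧ p.2 < m i}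

/-- The set of proper terminals of a vertex `v` of `G(n,m)`. -/
def tau (n : ℕ) (m : ℕ → ℕ) (v : ℕ × ℕ) : Set (ℕ × ℕ) :=
  {w ∈ Vnm n m | w ≠ v ∧ v.1 + w.1 ∉ Sn n}

/-- A (possibly non-injective) sum labeling of the graph `G(n,m)`. -/
def IsSumLabelingG (n : ℕ) (m : ℕ → ℕ) (ℓ : ℕ × ℕ → ℕ) : Prop :=
  (∀ v ∈ Vnm n m, 1 ≤ ℓ v) ∧
  ∀ u ∈ Vnm n m, ∀ v ∈ Vnm n m, u ≠ v →
    (AdjG n u v ↔ ∃ w ∈ Vnm n m, ℓ u + ℓ v = ℓ w)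

theorem mem_Sn {n k : ℕ} : k ∈ Sn n ↔ (2 ≤ k ∧ k ≤ n) ∨ k = n + 2 := Iff.rfl

/-- The integer `c` is the label of some vertex of `G(n,m)`. -/
def IsLabel (n : ℕ) (m : ℕ → ℕ) (ℓ : ℕ × ℕ → ℕ) (c : ℕ) : Prop :=
  ∃ w ∈ Vnm n m, ℓ w = c

theorem finite_Vnm (n : ℕ) (m : ℕ → ℕ) : (Vnm n m).Finite := by
  refine (((Finset.range (n + 3)).sigma fun i => Finset.range (m i)).image
    fun p => (p.1, p.2)).finite_toSet.subset ?_
  rintro ⟨i, j⟩ ⟨hi, hj⟩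
  rw [mem_Sn] at hi
  simp only at hi hj
  simp only [Finset.coe_image, Set.mem_image, Finset.mem_coe, Finset.mem_sigma, Finset.mem_range]
  exact ⟨⟨i, j⟩, ⟨by simp only; omega, hj⟩, rfl⟩

theorem Admissible.mem_Vnm_zero {n : ℕ} {m : ℕ → ℕ} (hm : Admissible n m) {c : ℕ}
    (hc : c ∈ Sn n) : (c, 0) ∈ Vnm n m := by
  refine ⟨hc, ?_⟩
  by_cases h : 2 * c ∈ Sn n
  · exact lt_of_lt_of_le (by norm_num) (hm.1 c hc h)
  · have := hm.2.1 c hc h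
    simp only
    omega

theorem Admissible.mem_Vnm_one {n : ℕ} {m : ℕ → ℕ} (hm : Admissible n m) {c : ℕ}
    (hc : c ∈ Sn n) (h : 2 * c ∈ Sn n) : (c, 1) ∈ Vnm n m :=
  ⟨hc, lt_of_lt_of_le (by norm_num) (hm.1 c hc h)⟩

/-- A class with no doubled element of `Sn n` consists of a single vertex. -/
theorem Admissible.eq_zero_of_large {n : ℕ} {m : ℕ → ℕ} (hm : Admissible n m) {w : ℕ × ℕ}
    (hw : w ∈ Vnm n m) (h : 2 * w.1 ∉ Sn n) : w = (w.1, 0) := by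
  have h1 := hm.2.1 w.1 hw.1 h
  have h2 := hw.2
  ext <;> simp only
  omega

/-- Any class compatible with `x` contains a neighbour of `x`, even if it is the class of `x`. -/
theorem Admissible.exists_ne {n : ℕ} {m : ℕ → ℕ} (hm : Admissible n m) (x : ℕ × ℕ) {c : ℕ}
    (hc : c ∈ Sn n) (hs : x.1 + c ∈ Sn n) : ∃ w ∈ Vnm n m, w.1 = c ∧ w ≠ x := by
  by_cases hx : x = (c, 0)
  · refine ⟨(c, 1), hm.mem_Vnm_one hc ?_, rfl, ?_⟩
    · rw [hx] at hs
      rwa [two_mul]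
    · rw [hx]
      simp
  · exact ⟨(c, 0), hm.mem_Vnm_zero hc, rfl, fun h => hx h.symm⟩

section Labeling

variable {n : ℕ} {m : ℕ → ℕ} {ℓ : ℕ × ℕ → ℕ}

theorem IsSumLabelingG.isLabel_add (hℓ : IsSumLabelingG n m ℓ) {x w : ℕ × ℕ}
    (hx : x ∈ Vnm n m) (hw : w ∈ Vnm n m) (hne : x ≠ w) (hs : x.1 + w.1 ∈ Sn n) :
    IsLabel n m ℓ (ℓ x + ℓ w) := by
  obtain ⟨z, hz, h⟩ := (hℓ.2 x hx w hw hne).1 ⟨hne, hs⟩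
  exact ⟨z, hz, h.symm⟩

theorem IsSumLabelingG.add_mem_Sn (hℓ : IsSumLabelingG n m ℓ) {x w : ℕ × ℕ}
    (hx : x ∈ Vnm n m) (hw : w ∈ Vnm n m) (hne : x ≠ w)
    (h : IsLabel n m ℓ (ℓ x + ℓ w)) : x.1 + w.1 ∈ Sn n := by
  obtain ⟨z, hz, h⟩ := h
  exact ((hℓ.2 x hx w hw hne).2 ⟨z, hz, h.symm⟩).2

/-- Vertices of equal label have the same neighbours apart from each other. -/
theorem IsSumLabelingG.add_mem_Sn_of_label_eq (hℓ : IsSumLabelingG n m ℓ) {x y w : ℕ × ℕ}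
    (hx : x ∈ Vnm n m) (hy : y ∈ Vnm n m) (hw : w ∈ Vnm n m) (hxy : ℓ x = ℓ y)
    (hwx : w ≠ x) (hwy : w ≠ y) (hs : x.1 + w.1 ∈ Sn n) : y.1 + w.1 ∈ Sn n := by
  have h := hℓ.isLabel_add hx hw hwx.symm hs
  rw [hxy] at h
  exact hℓ.add_mem_Sn hy hw hwy.symm h

theorem exists_separating_class (hn : 39 ≤ n) {p q : ℕ} (hp : p ∈ Sn n) (hq : q ∈ Sn n)
    (hpq : p < q) : ∃ c ∈ Sn n, p + c ∈ Sn n ∧ q + c ∉ Sn n ∧ c ≠ q := by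
  simp only [mem_Sn] at *
  by_cases h1 : q = n + 2
  · by_cases h2 : p = n - 1
    · exact ⟨3, by omega⟩
    · exact ⟨2, by omega⟩
  by_cases h2 : q = n + 2 - p
  · by_cases h3 : q = p + 2
    · exact ⟨p - 1, by omega⟩
    · exact ⟨n - p, by omega⟩
  · exact ⟨n + 2 - p, by omega⟩

theorem IsSumLabelingG.label_ne_of_lt (hℓ : IsSumLabelingG n m ℓ) (hn : 39 ≤ n)
    (hm : Admissible n m) {x y : ℕ × ℕ} (hx : x ∈ Vnm n m) (hy : y ∈ Vnm n m)
    (hlt : x.1 < y.1) : ℓ x ≠ ℓ y := by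
  intro heq
  obtain ⟨c, hc, h1, h2, h3⟩ := exists_separating_class hn hx.1 hy.1 hlt
  obtain ⟨w, hw, rfl, hwx⟩ := hm.exists_ne x hc h1
  refine h2 (hℓ.add_mem_Sn_of_label_eq hx hy hw heq hwx ?_ h1)
  rintro rfl
  exact h3 rfl

/-- Vertices of different classes have different labels. -/
theorem IsSumLabelingG.label_ne (hℓ : IsSumLabelingG n m ℓ) (hn : 39 ≤ n)
    (hm : Admissible n m) {x y : ℕ × ℕ} (hx : x ∈ Vnm n m) (hy : y ∈ Vnm n m)
    (hne : x.1 ≠ y.1) : ℓ x ≠ ℓ y := by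
  rcases lt_or_gt_of_ne hne with h | h
  · exact hℓ.label_ne_of_lt hn hm hx hy h
  · exact (hℓ.label_ne_of_lt hn hm hy hx h).symm

/-- The largest label belongs to the class `n + 2`. -/
theorem IsSumLabelingG.le_label_top (hℓ : IsSumLabelingG n m ℓ) (hn : 39 ≤ n)
    (hm : Admissible n m) {w : ℕ × ℕ} (hw : w ∈ Vnm n m) : ℓ w ≤ ℓ (n + 2, 0) := by
  obtain ⟨x, hx, hmax⟩ := Set.exists_max_image _ ℓ (finite_Vnm n m) ⟨w, hw⟩
  have hiso : ∀ c ∈ Sn n, x.1 + c ∉ Sn n := by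
    intro c hc hs
    obtain ⟨y, hy, rfl, hyx⟩ := hm.exists_ne x hc hs
    obtain ⟨z, hz, h⟩ := hℓ.isLabel_add hx hy hyx.symm hs
    have h1 := hmax z hz
    have h2 := hℓ.1 y hy
    omega
  have hx1 : x.1 = n + 2 := by
    have h0 := hx.1
    have h2 := hiso 2
    have h3 := hiso 3
    simp only [mem_Sn] at h0 h2 h3
    omega
  have hx0 := hm.eq_zero_of_large hx (by rw [mem_Sn]; omega)
  rw [hx1] at hx0
  rw [← hx0]
  exact hmax w hw

/-- Shifting by `s` moves all but at most `B.card` elements of `L` inside `L`, so at most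
`B.card` elements of `L` are at most `s`. -/
theorem card_filter_le_of_shift {L B : Finset ℕ} {s : ℕ} (hpos : ∀ c ∈ L, 1 ≤ c)
    (h : ∀ c ∈ L, c ∉ B → s + c ∈ L) : (L.filter (· ≤ s)).card ≤ B.card := by
  have h1 : (L \ B).card ≤ (L.filter (¬ · ≤ s)).card := by
    refine Finset.card_le_card_of_injOn (s + ·) ?_ (fun _ _ _ _ h => by simpa using h)
    intro c hc
    simp only [Finset.coe_sdiff, Set.mem_sdiff, Finset.mem_coe] at hc
    have := hpos c hc.1
    simp only [Finset.coe_filter, Set.mem_ofPred_eq]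
    exact ⟨h c hc.1 hc.2, by omega⟩
  have h2 := Finset.card_filter_add_card_filter_not (s := L) (· ≤ s)
  have h3 := Finset.le_card_sdiff B L
  omega

theorem mem_of_card_filter_le {L : Finset ℕ} (K : Finset ℕ) (s x k : ℕ)
    (hF : (L.filter (· ≤ s)).card ≤ k) (hk : k = K.card) (hK : ∀ c ∈ K, c ∈ L ∧ c ≤ s)
    (hx : x ∈ L) (hxs : x ≤ s) : x ∈ K := by
  have h : K ⊆ L.filter (· ≤ s) := fun c hc => by simpa using hK c hc
  rw [Finset.eq_of_subset_of_card_le h (hk ▸ hF)]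
  simp [hx, hxs]

/-- Bounds on the number of elements below `a, a', b, b'` force `1, a, a + 1` to be the smallest
elements of `L`. -/
theorem eq_and_succ_eq_of_card_filter_le {L : Finset ℕ} {a a' b b' : ℕ} (h1 : 1 ∈ L) (ha : a ∈ L)
    (ha' : a' ∈ L) (hb : b ∈ L) (hb' : b' ∈ L) (hsucc : a + 1 ∈ L) (ha1 : 1 < a) (ha1' : 1 < a')
    (hb1 : 1 < b) (hb1' : 1 < b') (hab : a ≠ b) (hab' : a ≠ b') (ha'b : a' ≠ b) (ha'b' : a' ≠ b')
    (ca : (L.filter (· ≤ a)).card ≤ 3) (ca' : (L.filter (· ≤ a')).card ≤ 3)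
    (cb : (L.filter (· ≤ b)).card ≤ 4) (cb' : (L.filter (· ≤ b')).card ≤ 4)
    (caa : a = a' → (L.filter (· ≤ a)).card ≤ 2) (cbb : b = b' → (L.filter (· ≤ b)).card ≤ 3) :
    a = a' ∧ (b = a + 1 ∨ b' = a + 1) := by
  by_cases haa : a = a'
  · refine ⟨haa, ?_⟩
    have low : ∀ x ∈ L, x ≤ a → x = 1 ∨ x = a := by
      intro x hx hxs
      simpa using mem_of_card_filter_le {1, a} a x 2 (caa haa)
        (by rw [Finset.card_pair]; omega) (by simp [h1, ha]; omega) hx hxs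
    have hlt : a < b := by
      have := low b hb
      omega
    have hlt' : a < b' := by
      have := low b' hb'
      omega
    rcases lt_trichotomy b b' with h | h | h
    · have := mem_of_card_filter_le {1, a, b, b'} b' (a + 1) 4 cb' (by grind) (by grind)
        hsucc (by omega)
      grind
    · have := mem_of_card_filter_le {1, a, b} b (a + 1) 3 (cbb h) (by grind) (by grind)
        hsucc (by omega)
      grind
    · have := mem_of_card_filter_le {1, a, b', b} b (a + 1) 4 cb (by grind) (by grind)
        hsucc (by omega)
      grind
  · exfalso
    have low : ∀ x ∈ L, x ≤ max a a' → x = 1 ∨ x = a ∨ x = a' := by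
      intro x hx hxs
      have cmax : (L.filter (· ≤ max a a')).card ≤ 3 := by
        rcases max_choice a a' with h | h <;> rwa [h]
      have := mem_of_card_filter_le {1, a, a'} (max a a') x 3 cmax (by grind) (by grind) hx hxs
      grind
    have hlt := low b hb
    have hlt' := low b' hb'
    rcases lt_trichotomy b b' with h | h | h
    · have := mem_of_card_filter_le {1, a, a', b} b' b' 4 cb' (by grind) (by grind) hb' le_rfl
      grind
    · have := mem_of_card_filter_le {1, a, a'} b b 3 (cbb h) (by grind) (by grind) hb le_rfl
      grind
    · have := mem_of_card_filter_le {1, a, a', b'} b b 4 cb (by grind) (by grind) hb le_rfl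
      grind

/-- A vertex of class `2` is adjacent to every other vertex whose label is not that of the classes
`n - 1` and `n + 2`. -/
theorem IsSumLabelingG.isLabel_add_class_two (hℓ : IsSumLabelingG n m ℓ)
    (hm : Admissible n m) {u w : ℕ × ℕ} (hu : u ∈ Vnm n m) (hu2 : u.1 = 2) (hw : w ∈ Vnm n m)
    (hne : u ≠ w) (h1 : ℓ w ≠ ℓ (n - 1, 0)) (h2 : ℓ w ≠ ℓ (n + 2, 0)) (hn : 39 ≤ n) :
    IsLabel n m ℓ (ℓ u + ℓ w) := by
  refine hℓ.isLabel_add hu hw hne ?_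
  have h0 := hw.1
  by_contra hs
  simp only [mem_Sn] at h0 hs
  have hz := hm.eq_zero_of_large hw (by rw [mem_Sn]; omega)
  rcases (by omega : w.1 = n - 1 ∨ w.1 = n + 2) with h | h <;> rw [h] at hz <;> rw [hz] at h1 h2
  · exact h1 rfl
  · exact h2 rfl

/-- A vertex of class `3` is adjacent to every other vertex whose label is not that of the classes
`n - 2`, `n` and `n + 2`. -/
theorem IsSumLabelingG.isLabel_add_class_three (hℓ : IsSumLabelingG n m ℓ)
    (hm : Admissible n m) {u w : ℕ × ℕ} (hu : u ∈ Vnm n m) (hu3 : u.1 = 3) (hw : w ∈ Vnm n m)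
    (hne : u ≠ w) (h1 : ℓ w ≠ ℓ (n - 2, 0)) (h2 : ℓ w ≠ ℓ (n, 0)) (h3 : ℓ w ≠ ℓ (n + 2, 0))
    (hn : 39 ≤ n) : IsLabel n m ℓ (ℓ u + ℓ w) := by
  refine hℓ.isLabel_add hu hw hne ?_
  have h0 := hw.1
  by_contra hs
  simp only [mem_Sn] at h0 hs
  have hz := hm.eq_zero_of_large hw (by rw [mem_Sn]; omega)
  rcases (by omega : w.1 = n - 2 ∨ w.1 = n ∨ w.1 = n + 2) with h | h | h <;>
    rw [h] at hz <;> rw [hz] at h1 h2 h3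
  · exact h1 rfl
  · exact h2 rfl
  · exact h3 rfl

/-- The label `1` does not occur on the class `n - 1`. -/
theorem IsSumLabelingG.label_one_class_ne_pred (hℓ : IsSumLabelingG n m ℓ) (hn : 39 ≤ n)
    (hm : Admissible n m) {v : ℕ × ℕ} (hv : v ∈ Vnm n m) (hone : ℓ v = 1) : v.1 ≠ n - 1 := by
  intro hvn
  have hS2 : 2 ∈ Sn n := by rw [mem_Sn]; omega
  have hS3 : 3 ∈ Sn n := by rw [mem_Sn]; omega
  have hv0 := hm.eq_zero_of_large hv (by rw [mem_Sn]; omega)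
  rw [hvn] at hv0
  obtain ⟨x, ⟨hx, hx3⟩, hmax⟩ := Set.exists_max_image {w | w ∈ Vnm n m ∧ w.1 = 3} ℓ
    ((finite_Vnm n m).subset fun _ h => h.1) ⟨(3, 0), hm.mem_Vnm_zero hS3, rfl⟩
  have hxv : IsLabel n m ℓ (ℓ x + ℓ v) := by
    refine hℓ.isLabel_add hx hv (fun h => ?_) (by rw [mem_Sn]; omega)
    rw [h] at hx3
    omega
  obtain ⟨y, hy, hyl⟩ := hxv
  obtain ⟨u, hu, hu2, huy⟩ : ∃ u ∈ Vnm n m, u.1 = 2 ∧ u ≠ y := by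
    by_cases h : y = (2, 0)
    · exact ⟨(2, 1), hm.mem_Vnm_one hS2 (by rw [mem_Sn]; omega), rfl, by simp [h]⟩
    · exact ⟨(2, 0), hm.mem_Vnm_zero hS2, rfl, fun h' => h h'.symm⟩
  have hu1 : ℓ u ≠ 1 := by
    rw [← hone]
    exact hℓ.label_ne hn hm hu hv (by omega)
  have hupos := hℓ.1 _ hu
  have hux : IsLabel n m ℓ (ℓ u + ℓ x) := by
    refine hℓ.isLabel_add hu hx (fun h => ?_) (by rw [mem_Sn]; omega)
    rw [← h] at hx3
    omega
  obtain ⟨z, hz, hzl⟩ := hux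
  have hxpos := hℓ.1 x hx
  have huyl : IsLabel n m ℓ (ℓ u + ℓ y) := by
    refine hℓ.isLabel_add_class_two hm hu hu2 hy huy ?_ ?_ hn
    · rw [← hv0]
      omega
    · have := hℓ.le_label_top hn hm hz
      omega
  have hzv : IsLabel n m ℓ (ℓ z + ℓ v) := by
    convert huyl using 1
    omega
  have hne : z ≠ v := by
    rintro rfl
    omega
  have hs := hℓ.add_mem_Sn hz hv hne hzv
  have hz1 := hz.1
  simp only [mem_Sn] at hs hz1
  have := hmax z ⟨hz, by omega⟩
  omega

theorem exists_finset_isLabel (n : ℕ) (m : ℕ → ℕ) (ℓ : ℕ × ℕ → ℕ) :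
    ∃ L : Finset ℕ, ∀ c, c ∈ L ↔ IsLabel n m ℓ c :=
  ⟨((finite_Vnm n m).image ℓ).toFinset, fun c => by simp [IsLabel]⟩

/-- If `1` is a label outside the classes `2` and `3`, then the class `2` has a repeated label `a`
and `a + 1` is a label of class `3`. -/
theorem IsSumLabelingG.exists_consecutive (hℓ : IsSumLabelingG n m ℓ) (hn : 39 ≤ n)
    (hm : Admissible n m) {v : ℕ × ℕ} (hv : v ∈ Vnm n m) (hone : ℓ v = 1) (hi : 4 ≤ v.1) :
    ℓ (2, 0) = ℓ (2, 1) ∧ ∃ x ∈ Vnm n m, x.1 = 3 ∧ ℓ x = ℓ (2, 0) + 1 := by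
  obtain ⟨L, hL⟩ := exists_finset_isLabel n m ℓ
  have hpos : ∀ c ∈ L, 1 ≤ c := by
    intro c hc
    obtain ⟨w, hw, rfl⟩ := (hL c).1 hc
    exact hℓ.1 w hw
  have hmem : ∀ {w}, w ∈ Vnm n m → ℓ w ∈ L := fun {w} hw => (hL _).2 ⟨w, hw, rfl⟩
  have hS2 : 2 ∈ Sn n := by rw [mem_Sn]; omega
  have hS3 : 3 ∈ Sn n := by rw [mem_Sn]; omega
  have hu := hm.mem_Vnm_zero hS2
  have hu' := hm.mem_Vnm_one hS2 (by rw [mem_Sn]; omega)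
  have hx := hm.mem_Vnm_zero hS3
  have hx' := hm.mem_Vnm_one hS3 (by rw [mem_Sn]; omega)
  have hvL : 1 ∈ L := hone ▸ hmem hv
  have hdist : ∀ {w z}, w ∈ Vnm n m → z ∈ Vnm n m → w.1 ≠ z.1 → ℓ w ≠ ℓ z :=
    fun hw hz h => hℓ.label_ne hn hm hw hz h
  have hgt : ∀ {w}, w ∈ Vnm n m → w.1 < 4 → 1 < ℓ w := by
    intro w hw h
    have h1 := hdist hw hv (by omega)
    have h2 := hℓ.1 w hw
    omega
  have two_le : ∀ {w}, w ∈ Vnm n m → w.1 = 2 → (L.filter (· ≤ ℓ w)).card ≤ 3 := by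
    intro w hw hw2
    refine (card_filter_le_of_shift (B := {ℓ (n - 1, 0), ℓ (n + 2, 0), ℓ w}) hpos ?_).trans
      Finset.card_le_three
    intro c hc hB
    obtain ⟨z, hz, rfl⟩ := (hL c).1 hc
    simp only [Finset.mem_insert, Finset.mem_singleton, not_or] at hB
    exact (hL _).2 (hℓ.isLabel_add_class_two hm hw hw2 hz (fun h => hB.2.2 (h ▸ rfl))
      hB.1 hB.2.1 hn)
  have three_le : ∀ {w}, w ∈ Vnm n m → w.1 = 3 → (L.filter (· ≤ ℓ w)).card ≤ 4 := by
    intro w hw hw3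
    refine (card_filter_le_of_shift (B := {ℓ (n - 2, 0), ℓ (n, 0), ℓ (n + 2, 0), ℓ w}) hpos
      ?_).trans Finset.card_le_four
    intro c hc hB
    obtain ⟨z, hz, rfl⟩ := (hL c).1 hc
    simp only [Finset.mem_insert, Finset.mem_singleton, not_or] at hB
    exact (hL _).2 (hℓ.isLabel_add_class_three hm hw hw3 hz (fun h => hB.2.2.2 (h ▸ rfl))
      hB.1 hB.2.1 hB.2.2.1 hn)
  have two_le_dup : ℓ (2, 0) = ℓ (2, 1) → (L.filter (· ≤ ℓ (2, 0))).card ≤ 2 := by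
    intro heq
    refine (card_filter_le_of_shift (B := {ℓ (n - 1, 0), ℓ (n + 2, 0)}) hpos ?_).trans
      Finset.card_le_two
    intro c hc hB
    obtain ⟨z, hz, rfl⟩ := (hL c).1 hc
    simp only [Finset.mem_insert, Finset.mem_singleton, not_or] at hB
    by_cases h : z = (2, 0)
    · rw [heq]
      exact (hL _).2 (hℓ.isLabel_add_class_two hm hu' rfl hz (by simp [h]) hB.1 hB.2 hn)
    · exact (hL _).2 (hℓ.isLabel_add_class_two hm hu rfl hz (Ne.symm h) hB.1 hB.2 hn)
  have three_le_dup : ℓ (3, 0) = ℓ (3, 1) → (L.filter (· ≤ ℓ (3, 0))).card ≤ 3 := by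
    intro heq
    refine (card_filter_le_of_shift (B := {ℓ (n - 2, 0), ℓ (n, 0), ℓ (n + 2, 0)}) hpos ?_).trans
      Finset.card_le_three
    intro c hc hB
    obtain ⟨z, hz, rfl⟩ := (hL c).1 hc
    simp only [Finset.mem_insert, Finset.mem_singleton, not_or] at hB
    by_cases h : z = (3, 0)
    · rw [heq]
      exact (hL _).2 (hℓ.isLabel_add_class_three hm hx' rfl hz (by simp [h]) hB.1 hB.2.1 hB.2.2 hn)
    · exact (hL _).2 (hℓ.isLabel_add_class_three hm hx rfl hz (Ne.symm h) hB.1 hB.2.1 hB.2.2 hn)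
  have hsucc : ℓ (2, 0) + 1 ∈ L := by
    rw [← hone]
    refine (hL _).2 (hℓ.isLabel_add hu hv (fun h => by rw [← h] at hi; simp at hi) ?_)
    have h1 := hv.1
    have h2 := hℓ.label_one_class_ne_pred hn hm hv hone
    have h3 : v.1 ≠ n + 2 := by
      intro h
      have hv0 := hm.eq_zero_of_large hv (by rw [mem_Sn]; omega)
      rw [h] at hv0
      have := hℓ.le_label_top hn hm hu
      rw [← hv0, hone] at this
      have := hgt hu (by simp)
      omega
    simp only [mem_Sn] at h1 ⊢
    omega
  obtain ⟨heq, h | h⟩ := eq_and_succ_eq_of_card_filter_le hvL (hmem hu) (hmem hu') (hmem hx)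
    (hmem hx') hsucc (hgt hu (by simp)) (hgt hu' (by simp)) (hgt hx (by simp)) (hgt hx' (by simp))
    (hdist hu hx (by simp)) (hdist hu hx' (by simp)) (hdist hu' hx (by simp))
    (hdist hu' hx' (by simp)) (two_le hu rfl) (two_le hu' rfl) (three_le hx rfl)
    (three_le hx' rfl) two_le_dup three_le_dup
  · exact ⟨heq, _, hx, rfl, h⟩
  · exact ⟨heq, _, hx', rfl, h⟩

/-- A vertex of class `i ≥ 4` with `i ≠ n - 1` has four non-neighbours in classes other than its
own among `n - 3, n - 2, n - 1, n, n + 2`. -/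
theorem exists_nonadjacent_classes (hn : 39 ≤ n) {i : ℕ} (hi : 4 ≤ i) (hpred : i ≠ n - 1) :
    ∃ C : Finset ℕ, C.card = 4 ∧ ∀ c ∈ C, c ∈ Sn n ∧ c ≠ i ∧ i + c ∉ Sn n := by
  by_cases h1 : i = n + 2
  · refine ⟨{n - 3, n - 2, n - 1, n}, by grind, ?_⟩
    simp only [mem_Sn, Finset.mem_insert, Finset.mem_singleton]
    omega
  by_cases h2 : i = n
  · refine ⟨{n - 3, n - 2, n - 1, n + 2}, by grind, ?_⟩
    simp only [mem_Sn, Finset.mem_insert, Finset.mem_singleton]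
    omega
  by_cases h3 : i = 4 ∨ i = n - 2
  · refine ⟨{n - 3, n - 1, n, n + 2}, by grind, ?_⟩
    simp only [mem_Sn, Finset.mem_insert, Finset.mem_singleton]
    omega
  · refine ⟨{n - 2, n - 1, n, n + 2}, by grind, ?_⟩
    simp only [mem_Sn, Finset.mem_insert, Finset.mem_singleton]
    omega

end Labeling

/-- For `n ≥ 39`, any admissible `m`, any sum labeling `ℓ` of `G(n,m)`, and
any vertex `v = (i,j)`: if `ℓ v = 1`, then `i ≤ 3`. -/
theorem one_only_on_low (n : ℕ) (hn : 39 ≤ n) (m : ℕ → ℕ)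
    (hm : Admissible n m) (ℓ : ℕ × ℕ → ℕ) (hℓ : IsSumLabelingG n m ℓ)
    (v : ℕ × ℕ) (hv : v ∈ Vnm n m) (hone : ℓ v = 1) :
    v.1 ≤ 3 := by
  by_contra! hi
  obtain ⟨heq, x, hx, hx3, hxl⟩ := hℓ.exists_consecutive hn hm hv hone hi
  obtain ⟨C, hCcard, hC⟩ := exists_nonadjacent_classes hn hi
    (hℓ.label_one_class_ne_pred hn hm hv hone)
  obtain ⟨L, hL⟩ := exists_finset_isLabel n m ℓ
  have hmem : ∀ {w}, w ∈ Vnm n m → ℓ w ∈ L := fun {w} hw => (hL _).2 ⟨w, hw, rfl⟩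
  have hS2 : 2 ∈ Sn n := by rw [mem_Sn]; omega
  have hu := hm.mem_Vnm_zero hS2
  have hu' := hm.mem_Vnm_one hS2 (by rw [mem_Sn]; omega)
  have hu1 : ℓ (2, 0) ≠ 1 := hone ▸ hℓ.label_ne hn hm hu hv (by simp only; omega)
  -- `c + 1` is a label for all `c` in `A`, and for no `c` in `T`.
  set A := L.filter fun c => c ≠ 1 ∧ c + 1 ∈ L with hA
  set T := C.image fun c => ℓ (c, 0) with hT
  have hTcard : T.card = 4 := by
    rw [hT, Finset.card_image_of_injOn, hCcard]
    intro c hc d hd h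
    by_contra hne
    exact hℓ.label_ne hn hm (hm.mem_Vnm_zero (hC c hc).1) (hm.mem_Vnm_zero (hC d hd).1) hne h
  have hTmem : ∀ t ∈ T, t ∈ L ∧ t ≠ 1 ∧ t + 1 ∉ L := by
    intro t ht
    obtain ⟨c, hc, rfl⟩ := Finset.mem_image.1 ht
    obtain ⟨hcS, hci, hcs⟩ := hC c hc
    have hcV := hm.mem_Vnm_zero hcS
    refine ⟨hmem hcV, hone ▸ hℓ.label_ne hn hm hcV hv hci, fun h => hcs ?_⟩
    refine hℓ.add_mem_Sn hv hcV (fun h => hci (h ▸ rfl)) ((hL _).1 ?_)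
    rwa [hone, add_comm]
  have h1T : 1 ∉ T := fun h => (hTmem 1 h).2.1 rfl
  have hAT : A.card + 5 ≤ L.card := by
    have hcard := Finset.card_insert_of_notMem h1T
    rw [hTcard] at hcard
    rw [show 5 = 4 + 1 from rfl, ← hcard, ← Finset.card_union_of_disjoint]
    · refine Finset.card_le_card (Finset.union_subset (Finset.filter_subset _ _) ?_)
      intro t ht
      rcases Finset.mem_insert.1 ht with rfl | ht
      · exact hone ▸ hmem hv
      · exact (hTmem t ht).1
    · rw [Finset.disjoint_left]
      intro t htA ht
      have htA := (Finset.mem_filter.1 htA).2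
      rcases Finset.mem_insert.1 ht with h | ht
      · exact htA.1 h
      · exact (hTmem t ht).2.2 htA.2
  set B : Finset ℕ := {ℓ (n - 2, 0), ℓ (n - 1, 0), ℓ (n, 0), ℓ (n + 2, 0), ℓ x} with hB
  have hshift : (L \ B).card ≤ (A.erase (ℓ (2, 0))).card := by
    refine Finset.card_le_card_of_injOn (ℓ (2, 0) + ·) ?_ (fun _ _ _ _ h => by simpa using h)
    intro c hc
    obtain ⟨hcL, hcB⟩ := Finset.mem_sdiff.1 (Finset.mem_coe.1 hc)
    obtain ⟨w, hw, rfl⟩ := (hL c).1 hcL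
    simp only [hB, Finset.mem_insert, Finset.mem_singleton, not_or] at hcB
    obtain ⟨hb1, hb2, hb3, hb4, hb5⟩ := hcB
    have hwpos := hℓ.1 w hw
    have hupos := hℓ.1 _ hu
    have hadd : ℓ (2, 0) + ℓ w ∈ L := by
      by_cases h : w = (2, 0)
      · rw [heq]
        exact (hL _).2 (hℓ.isLabel_add_class_two hm hu' rfl hw (by simp [h]) hb2 hb4 hn)
      · exact (hL _).2 (hℓ.isLabel_add_class_two hm hu rfl hw (Ne.symm h) hb2 hb4 hn)
    have hadd' : ℓ (2, 0) + ℓ w + 1 ∈ L := by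
      have h := (hL _).2 (hℓ.isLabel_add_class_three hm hx hx3 hw (fun h => hb5 (h ▸ rfl))
        hb1 hb3 hb4 hn)
      rwa [hxl, add_right_comm] at h
    simp only [Finset.mem_coe, Finset.mem_erase, hA, Finset.mem_filter]
    exact ⟨by omega, hadd, by omega, hadd'⟩
  have haA : ℓ (2, 0) ∈ A := Finset.mem_filter.2 ⟨hmem hu, hu1, hxl ▸ hmem hx⟩
  have hBcard : B.card ≤ 5 := Finset.card_le_five
  have h1 := Finset.le_card_sdiff B L
  have h2 := Finset.card_erase_add_one haA
  omega
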